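/- arXiv:0907.2305 — 8 statements merged into one kernel-verified Lean document; each statement's English description precedes it below -/
import Mathlib

section
/- Let (z12, z21, z34, z43) ∈ (ℂ∖{0,1})⁴. Then the three equations z12·z21 = z34·z43, (1−z12)(1−z34) = (1−z21)(1−z43), and (1−z12)(1−z43)·z21·z34 = (1−z21)(1−z34)·z12·z43 hold simultaneously if and only if either (i) z12 = z21 = z34 = z43, or (ii) z34 = −z12·(1−z21)/(1−z12) and z43 = −z21·(1−z12)/(1−z21). -/
/-!
Write `a, b, c, d` for `z12, z21, z34, z43`. Eliminating `1 - d` between the last two equations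
gives `(1 - a)² b c = (1 - b)² a d`; multiplying by `c` and using `c d = a b` turns this into
`((1 - a) c)² = ((1 - b) a)²`. The sign `-` is branch (ii). With the sign `+`, one has
`(1 - a) c = (1 - b) a` and `(1 - b) d = (1 - a) b`, and the second equation then
reads `1 - 2a + ab = 1 - 2b + ab`, so `a = b` and all four parameters coincide.
-/

/-- The variety of "hyperbolic" cross-ratio structures has two branches:
`z12 = z21 = z34 = z43`, or `z34 = -z12(1-z21)/(1-z12)`, `z43 = -z21(1-z12)/(1-z21)`. -/
theorem hyperbolic_branches (z12 z21 z34 z43 : ℂ)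
    (h12 : z12 ≠ 0) (h12' : z12 ≠ 1) (h21 : z21 ≠ 0) (h21' : z21 ≠ 1)
    (h34 : z34 ≠ 0) (h34' : z34 ≠ 1) (h43 : z43 ≠ 0) (h43' : z43 ≠ 1) :
    (z12 * z21 = z34 * z43 ∧
     (1 - z12) * (1 - z34) = (1 - z21) * (1 - z43) ∧
     (1 - z12) * (1 - z43) * z21 * z34 = (1 - z21) * (1 - z34) * z12 * z43)
    ↔
    ((z12 = z21 ∧ z21 = z34 ∧ z34 = z43) ∨
     (z34 = -z12 * (1 - z21) / (1 - z12) ∧ z43 = -z21 * (1 - z12) / (1 - z21))) := by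
  have hA : 1 - z12 ≠ 0 := sub_ne_zero.mpr h12'.symm
  have hB : 1 - z21 ≠ 0 := sub_ne_zero.mpr h21'.symm
  have hC : 1 - z34 ≠ 0 := sub_ne_zero.mpr h34'.symm
  constructor
  · rintro ⟨e1, e2, e3⟩
    have k1 : (1 - z12) ^ 2 * z21 * z34 = (1 - z21) ^ 2 * z12 * z43 := by
      apply mul_left_cancel₀ hC
      linear_combination (1 - z21) * e3 + (1 - z12) * z21 * z34 * e2
    have k2 : ((1 - z12) * z34) ^ 2 = ((1 - z21) * z12) ^ 2 := by
      apply mul_left_cancel₀ h21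
      linear_combination z34 * k1 - (1 - z21) ^ 2 * z12 * e1
    rcases sq_eq_sq_iff_eq_or_eq_neg.mp k2 with h | h
    · left
      have hd : (1 - z21) * z43 = (1 - z12) * z21 := by
        apply mul_left_cancel₀ h34
        linear_combination -z21 * h - (1 - z21) * e1
      have hab : z12 = z21 := by linear_combination (-1 / 2) * (e2 + h - hd)
      subst hab
      have hc := mul_left_cancel₀ hA h
      have hd' := mul_left_cancel₀ hA hd
      exact ⟨rfl, hc.symm, hc.trans hd'.symm⟩
    · right
      have hd : (1 - z21) * z43 = -((1 - z12) * z21) := by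
        apply mul_left_cancel₀ h34
        linear_combination z21 * h - (1 - z21) * e1
      constructor
      · rw [eq_div_iff hA]
        linear_combination h
      · rw [eq_div_iff hB]
        linear_combination hd
  · rintro (⟨rfl, rfl, rfl⟩ | ⟨h, hd⟩)
    · exact ⟨rfl, rfl, rfl⟩
    · rw [eq_div_iff hA] at h
      rw [eq_div_iff hB] at hd
      refine ⟨?_, ?_, ?_⟩
      · apply mul_left_cancel₀ (mul_ne_zero hA hB)
        linear_combination -(z43 * (1 - z21)) * h + z12 * (1 - z21) * hd
      · linear_combination hd - h
      · linear_combination (1 - z43) * z21 * h - (1 - z34) * z12 * hd + z12 * z21 * (hd - h)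
end

section
/- Let z12, z21 ∈ ℂ∖{0,1} and set z34 = −z12·(1−z21)/(1−z12), z43 = −z21·(1−z12)/(1−z21), and assume z34, z43 ∈ ℂ∖{0,1}. Define z13 = 1/(1−z12), z31 = 1/(1−z34), z14 = 1 − 1/z12, z41 = 1 − 1/z43, and set z1 = z12·z21, z2 = z13·z31, z3 = z14·z41. Then z1 ∉ {0,1}, z2 = 1/(1−z1), z3 = 1/(1−z2), and z1·z2·z3 = −1. In contrast, for the branch z12 = z21 = z34 = z43 = z ∈ ℂ∖{0,1}, with z13 = z31 = 1/(1−z) and z14 = z41 = 1 − 1/z, the products z1 = z², z2 = (z13)², z3 = (z14)² satisfy z1·z2·z3 = 1. -/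
/-!
Direct computation: on the hyperbolic branch `1 - z34 = (1 - z12 * z21) / (1 - z12)`, so that
`z2 = 1 / (1 - z1)`, and cancelling in `z14 * z41` gives `z3 = -(1 - z1) / z1`, which is
`1 / (1 - z2)`. The product is then `-1`. On the other branch it is the square of
`z * (1 / (1 - z)) * (1 - 1 / z) = -1`.
-/

/-- On the hyperbolic branch, the vertex products `z1 = z12·z21`, `z2 = z13·z31`,
`z3 = z14·z41` satisfy the similarity relations of an ideal hyperbolic tetrahedron
and `z1·z2·z3 = -1`; on the branch `z12 = z21 = z34 = z43 = z` one has
`z1·z2·z3 = 1` instead. -/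
theorem hyperbolic_branch_vertex_products
    (z12 z21 : ℂ) (h12 : z12 ≠ 0) (h12' : z12 ≠ 1) (h21 : z21 ≠ 0) (h21' : z21 ≠ 1)
    (z34 z43 : ℂ)
    (hz34 : z34 = -z12 * (1 - z21) / (1 - z12))
    (hz43 : z43 = -z21 * (1 - z12) / (1 - z21))
    (h34 : z34 ≠ 0) (h34' : z34 ≠ 1) (h43 : z43 ≠ 0) (h43' : z43 ≠ 1)
    (z13 z31 z14 z41 z1 z2 z3 : ℂ)
    (hz13 : z13 = 1 / (1 - z12)) (hz31 : z31 = 1 / (1 - z34))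
    (hz14 : z14 = 1 - 1 / z12) (hz41 : z41 = 1 - 1 / z43)
    (hz1 : z1 = z12 * z21) (hz2 : z2 = z13 * z31) (hz3 : z3 = z14 * z41) :
    (z1 ≠ 0 ∧ z1 ≠ 1 ∧ z2 = 1 / (1 - z1) ∧ z3 = 1 / (1 - z2) ∧ z1 * z2 * z3 = -1)
    ∧
    (∀ z : ℂ, z ≠ 0 → z ≠ 1 →
      (z ^ 2) * ((1 / (1 - z)) ^ 2) * ((1 - 1 / z) ^ 2) = 1) := by
  have hb : 1 - z12 ≠ 0 := sub_ne_zero.mpr h12'.symm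
  have hc : 1 - z21 ≠ 0 := sub_ne_zero.mpr h21'.symm
  have e34 : 1 - z34 = (1 - z12 * z21) / (1 - z12) := by
    rw [hz34]; field_simp; ring
  -- The excluded value `z34 = 1` is exactly the degenerate case `z12 * z21 = 1`.
  have hd : 1 - z12 * z21 ≠ 0 := fun h =>
    sub_ne_zero.mpr h34'.symm (by rw [e34, h, zero_div])
  have e2 : z2 = 1 / (1 - z1) := by
    rw [hz2, hz13, hz31, e34, hz1]; field_simp
  have e3 : z3 = -(1 - z1) / z1 := by
    rw [hz3, hz14, hz41, hz43, hz1]; field_simp; ring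
  have h1 : z1 ≠ 0 := hz1 ▸ mul_ne_zero h12 h21
  have hd1 : 1 - z1 ≠ 0 := hz1 ▸ hd
  have e2' : 1 - z2 = -z1 / (1 - z1) := by
    rw [e2]; field_simp; ring
  refine ⟨⟨h1, (sub_ne_zero.mp hd1).symm, e2, ?_, ?_⟩, fun z hz hz' => ?_⟩
  · rw [e3, e2', one_div_div, div_neg, neg_div]
  · rw [e2, e3]; field_simp
  · have hz1' : 1 - z ≠ 0 := sub_ne_zero.mpr hz'.symm
    field_simp; ring
end

section
/- Let X assign to each quadruple (i,j,k,l) of pairwise distinct indices in {1,2,3,4,5} a value X(i,j,k,l) ∈ ℂ∖{0,1}, and suppose X satisfies the inverse relation, the similarity relation, and the edge compatibility relation. Set x1 = X(1,2,3,4), x2 = X(2,1,4,3), x3 = X(3,4,1,2), y1 = X(1,2,3,5), y2 = X(2,1,5,3), y3 = X(3,5,1,2), z3 = X(4,5,2,3), w3 = X(4,5,1,3), z4 = X(5,4,3,2), w4 = X(5,4,3,1). Then the remaining column entries are determined: X(4,3,2,1) = z3(1−w3)/(w3(1−z3)); X(5,3,2,1) = (1−w4)/(1−z4); X(1,2,4,5)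 = y1/x1; X(2,1,5,4) = y2/x2; X(4,5,1,2) = w3/z3; X(5,4,2,1) = w4/z4; X(1,3,4,5) = (1−y1)/(1−x1); X(3,1,5,4) = (1−y3)/(1−x3); X(2,3,4,5) = x2(1−y2)/(y2(1−x2)); X(3,2,5,4) = x3(1−y3)/(y3(1−x3)). -/
/-!
Fix the first index `i`. The three relations say that `X i` behaves like the affine ratio
`X i j k l = (p l - p j) / (p k - p j)` of four points `p` in the plane (the cross-ratio with `i`
sent to infinity). Two of its identities suffice: the change of base point
`X i k j l = 1 - X i j k l`, which follows from the similarity and inverse relations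
(`change_base`), and the division formula `X i j k l = X i j m l / X i j m k`, which combines the
edge and inverse relations (`hdiv` in the proof). Each of the ten entries is a quotient of two
ratios with a common base point; the change of base point and the inverse relation turn these
two ratios into the given coordinates at the vertex `i`.
-/

/-- The similarity relation gives `c = 1 / (1 - a)`, and `b` is the inverse of `c`; with
`a = X i j k l`, `c = X i k l j` and `b = X i k j l` this is the change of base point from `j`
to `k`. -/
lemma change_base {a b c : ℂ} (hb : b * c = 1) (hc : c = 1 / (1 - a)) : b = 1 - a := by
  have h0 : (1 - a) ≠ 0 := by
    intro h
    rw [hc, h] at hb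
    simp at hb
  rw [hc] at hb
  field_simp at hb
  exact hb

/-- Proposition 1 of the paper: for a cross-ratio structure on five points
(indices `0,…,4` of `Fin 5` standing for the points `p₁,…,p₅`) satisfying the
inverse, similarity and edge compatibility relations, all invariants are
determined by the ten coordinates
`x1,x2,x3,y1,y2,y3,z3,z4,w3,w4`. -/
theorem five_points_edge_compatibility
    (X : Fin 5 → Fin 5 → Fin 5 → Fin 5 → ℂ)
    (hval : ∀ i j k l : Fin 5, i ≠ j → i ≠ k → i ≠ l → j ≠ k → j ≠ l → k ≠ l →
      X i j k l ≠ 0 ∧ X i j k l ≠ 1)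
    (hinv : ∀ i j k l : Fin 5, i ≠ j → i ≠ k → i ≠ l → j ≠ k → j ≠ l → k ≠ l →
      X i j k l * X i j l k = 1)
    (hsim : ∀ i j k l : Fin 5, i ≠ j → i ≠ k → i ≠ l → j ≠ k → j ≠ l → k ≠ l →
      X i j k l = 1 / (1 - X i l j k))
    (hedge : ∀ i j k l m : Fin 5, i ≠ j → i ≠ k → i ≠ l → i ≠ m → j ≠ k → j ≠ l →
      j ≠ m → k ≠ l → k ≠ m → l ≠ m →
      X i j k l = X i j k m * X i j m l)
    (x1 x2 x3 y1 y2 y3 z3 z4 w3 w4 : ℂ)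
    (hx1 : x1 = X 0 1 2 3)  -- x1 = X(1,2,3,4)
    (hx2 : x2 = X 1 0 3 2)  -- x2 = X(2,1,4,3)
    (hx3 : x3 = X 2 3 0 1)  -- x3 = X(3,4,1,2)
    (hy1 : y1 = X 0 1 2 4)  -- y1 = X(1,2,3,5)
    (hy2 : y2 = X 1 0 4 2)  -- y2 = X(2,1,5,3)
    (hy3 : y3 = X 2 4 0 1)  -- y3 = X(3,5,1,2)
    (hz3 : z3 = X 3 4 1 2)  -- z3 = X(4,5,2,3)
    (hw3 : w3 = X 3 4 0 2)  -- w3 = X(4,5,1,3)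
    (hz4 : z4 = X 4 3 2 1)  -- z4 = X(5,4,3,2)
    (hw4 : w4 = X 4 3 2 0)  -- w4 = X(5,4,3,1)
    :
    X 3 2 1 0 = z3 * (1 - w3) / (w3 * (1 - z3)) ∧  -- X(4,3,2,1)
    X 4 2 1 0 = (1 - w4) / (1 - z4) ∧               -- X(5,3,2,1)
    X 0 1 3 4 = y1 / x1 ∧                            -- X(1,2,4,5)
    X 1 0 4 3 = y2 / x2 ∧                            -- X(2,1,5,4)
    X 3 4 0 1 = w3 / z3 ∧                            -- X(4,5,1,2)
    X 4 3 1 0 = w4 / z4 ∧                            -- X(5,4,2,1)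
    X 0 2 3 4 = (1 - y1) / (1 - x1) ∧                -- X(1,3,4,5)
    X 2 0 4 3 = (1 - y3) / (1 - x3) ∧                -- X(3,1,5,4)
    X 1 2 3 4 = x2 * (1 - y2) / (y2 * (1 - x2)) ∧    -- X(2,3,4,5)
    X 2 1 4 3 = x3 * (1 - y3) / (y3 * (1 - x3)) := by -- X(3,2,5,4)
  have hne : ∀ i j k l : Fin 5, (h : [i, j, k, l].Nodup := by decide) →
      X i j k l ≠ 0 ∧ 1 - X i j k l ≠ 0 := by
    intro i j k l h
    simp only [List.nodup_cons, List.mem_cons, List.not_mem_nil, or_false, not_or] at h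
    obtain ⟨⟨h1, h2, h3⟩, ⟨h4, h5⟩, h6, -⟩ := h
    have h7 := hval i j k l h1 h2 h3 h4 h5 h6
    exact ⟨h7.1, sub_ne_zero.2 h7.2.symm⟩
  have hflip : ∀ i j k l : Fin 5, (h : [i, j, k, l].Nodup := by decide) →
      X i j l k = 1 / X i j k l := by
    intro i j k l h
    simp only [List.nodup_cons, List.mem_cons, List.not_mem_nil, or_false, not_or] at h
    obtain ⟨⟨h1, h2, h3⟩, ⟨h4, h5⟩, h6, -⟩ := h
    exact eq_one_div_of_mul_eq_one_right (hinv i j k l h1 h2 h3 h4 h5 h6)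
  have hbase : ∀ i j k l : Fin 5, (h : [i, j, k, l].Nodup := by decide) →
      X i k j l = 1 - X i j k l := by
    intro i j k l h
    simp only [List.nodup_cons, List.mem_cons, List.not_mem_nil, or_false, not_or] at h
    obtain ⟨⟨h1, h2, h3⟩, ⟨h4, h5⟩, h6, -⟩ := h
    exact change_base (hinv i k j l h2 h1 h3 (Ne.symm h4) h6 h5)
      (hsim i k l j h2 h3 h1 h6 (Ne.symm h4) (Ne.symm h5))
  have hdiv : ∀ i j k l m : Fin 5, (h : [i, j, k, l, m].Nodup := by decide) →
      X i j k l = X i j m l / X i j m k := by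
    intro i j k l m h
    simp only [List.nodup_cons, List.mem_cons, List.not_mem_nil, or_false, not_or] at h
    obtain ⟨⟨h1, h2, h3, h4⟩, ⟨h5, h6, h7⟩, ⟨h8, h9⟩, h10, -⟩ := h
    have h_inv := hinv i j k m h1 h2 h4 h5 h7 h9
    rw [hedge i j k l m h1 h2 h3 h4 h5 h6 h7 h8 h9 h10, eq_one_div_of_mul_eq_one_left h_inv]
    ring
  have hrev : ∀ a b : ℂ, (1 / a) / (1 / b) = b / a := fun a b => by
    rw [div_div_div_eq, one_mul, mul_one]
  subst hx1 hx2 hx3 hy1 hy2 hy3 hz3 hz4 hw3 hw4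
  -- The elementary identity behind the entries whose coordinates enter through their inverses.
  have key : ∀ a b : ℂ, a ≠ 0 → 1 - a ≠ 0 → b ≠ 0 →
      (1 - 1 / b) / (1 - 1 / a) = a * (1 - b) / (b * (1 - a)) := by
    intro a b ha ha1 hb
    have h : 1 - 1 / a ≠ 0 := by
      rw [one_sub_div ha]
      exact div_ne_zero (by rw [← neg_sub]; exact neg_ne_zero.2 ha1) ha
    rw [div_eq_div_iff h (mul_ne_zero hb ha1)]
    field_simp
    ring
  refine ⟨?_, ?_, ?_, ?_, ?_, ?_, ?_, ?_, ?_, ?_⟩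
  · rw [hdiv 3 2 1 0 4,
      hbase 3 4 2 0,
      hbase 3 4 2 1,
      hflip 3 4 0 2,
      hflip 3 4 1 2]
    exact key _ _ (hne 3 4 1 2).1
      (hne 3 4 1 2).2
      (hne 3 4 0 2).1
  · rw [hdiv 4 2 1 0 3,
      hbase 4 3 2 0,
      hbase 4 3 2 1]
  · rw [hdiv 0 1 3 4 2]
  · rw [hdiv 1 0 4 3 2,
      hflip 1 0 3 2,
      hflip 1 0 4 2]
    exact hrev _ _
  · rw [hdiv 3 4 0 1 2,
      hflip 3 4 1 2,
      hflip 3 4 0 2]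
    exact hrev _ _
  · rw [hdiv 4 3 1 0 2]
  · rw [hdiv 0 2 3 4 1,
      hbase 0 1 2 4,
      hbase 0 1 2 3]
  · rw [hdiv 2 0 4 3 1,
      hflip 2 0 3 1,
      hflip 2 0 4 1,
      hbase 2 3 0 1,
      hbase 2 4 0 1,
      hrev _ _]
  · rw [hdiv 1 2 3 4 0,
      hbase 1 0 2 4,
      hbase 1 0 2 3,
      hflip 1 0 4 2,
      hflip 1 0 3 2]
    exact key _ _ (hne 1 0 3 2).1
      (hne 1 0 3 2).2
      (hne 1 0 4 2).1
  · rw [hdiv 2 1 4 3 0,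
      hflip 2 1 3 0,
      hflip 2 1 4 0,
      hrev _ _,
      hbase 2 4 1 0,
      hbase 2 3 1 0,
      hflip 2 4 0 1,
      hflip 2 3 0 1]
    exact key _ _ (hne 2 3 0 1).1
      (hne 2 3 0 1).2
      (hne 2 4 0 1).1
end

section
/- Let X assign to each quadruple (i,j,k,l) of pairwise distinct indices in {1,2,3,4,5} a value X(i,j,k,l) ∈ ℂ∖{0,1}, and suppose X satisfies the inverse relation, the similarity relation, the edge compatibility relation, and the face compatibility relation. Set x1 = X(1,2,3,4), x2 = X(2,1,4,3), x3 = X(3,4,1,2), x4 = X(4,3,2,1), y1 = X(1,2,3,5), y2 = X(2,1,5,3), y3 = X(3,5,1,2), y4 = X(5,3,2,1), z3 = X(4,5,2,3), w3 = X(4,5,1,3), z4 = X(5,4,3,2), w4 = X(5,4,3,1), and let P = −y1·x1·y2 − x1·x2 + y1·x1·x2 + x1 + y1·y2 − y1. Assume x1 ≠ y1, x2 ≠ y2 and P ≠ 0. Then: y3 = y1·x3·(y2−1)(x1−1)/(x1(y1−1)(x2−1)); z3 = x4·P/(y1(x4−1)(x2−y2)(x1−1)); w3 = P/((x4−1)(x1−y1)(x2−1));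 z4 = x1(y4−1)(y1−1)(x2−y2)/(y4·P); w4 = (y4−1)(y2−1)(x1−y1)/P. -/
/-!
For a fixed vertex `i`, the inverse, similarity and edge relations say that `X i j k l` is the
affine ratio `(t l - t j) / (t k - t j)` of four complex numbers attached to the other four indices.
Hence two of these ratios determine all the others at `i`; the formula needed is
`FivePointRatio.fourth`.

The face relation on `{0,1,2}` gives `y3`. The face relations on `{1,2,3}` and `{0,2,3}` are linear
in `z3` and `w3` respectively, and the only way the ratios at vertex `2` enter them is through
`y3 / x3`, which the first relation expresses by `x1, x2, y1, y2`; this is where the polynomial `P`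
appears. Exchanging the indices `3` and `4` exchanges `x` and `y`, turns `z3, w3` into
`z4⁻¹, w4⁻¹` and `P` into `-P`, so the formulas for `z4, w4` follow by symmetry.
-/

/-- Cross-ratio structures on five points: functions on quadruples of distinct indices with values
in `ℂ ∖ {0, 1}` that satisfy the inverse, similarity, edge and face relations. -/
structure FivePointRatio (X : Fin 5 → Fin 5 → Fin 5 → Fin 5 → ℂ) : Prop where
  val : ∀ i j k l : Fin 5, i ≠ j → i ≠ k → i ≠ l → j ≠ k → j ≠ l → k ≠ l →
      X i j k l ≠ 0 ∧ X i j k l ≠ 1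
  inv : ∀ i j k l : Fin 5, i ≠ j → i ≠ k → i ≠ l → j ≠ k → j ≠ l → k ≠ l →
      X i j k l * X i j l k = 1
  sim : ∀ i j k l : Fin 5, i ≠ j → i ≠ k → i ≠ l → j ≠ k → j ≠ l → k ≠ l →
      X i j k l = 1 / (1 - X i l j k)
  edge : ∀ i j k l m : Fin 5, i ≠ j → i ≠ k → i ≠ l → i ≠ m → j ≠ k → j ≠ l →
      j ≠ m → k ≠ l → k ≠ m → l ≠ m →
      X i j k l = X i j k m * X i j m l
  face : ∀ i j k l m : Fin 5, i ≠ j → i ≠ k → i ≠ l → i ≠ m → j ≠ k → j ≠ l →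
      j ≠ m → k ≠ l → k ≠ m → l ≠ m →
      X i j k l * X l j i k * X k j l i = X i m k l * X l m i k * X k m l i

namespace FivePointRatio

variable {X : Fin 5 → Fin 5 → Fin 5 → Fin 5 → ℂ}

lemma swap (h : FivePointRatio X) {i j k l : Fin 5} (hd : [i, j, k, l].Nodup) :
    X i j l k = 1 / X i j k l := by
  simp only [List.nodup_cons, List.mem_cons, List.not_mem_nil, or_false, not_or] at hd
  obtain ⟨⟨h1, h2, h3⟩, ⟨h4, h5⟩, h6, -⟩ := hd
  rw [eq_div_iff (h.val i j k l h1 h2 h3 h4 h5 h6).1, mul_comm]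
  exact h.inv i j k l h1 h2 h3 h4 h5 h6

lemma rot (h : FivePointRatio X) {i j k l : Fin 5} (hd : [i, j, k, l].Nodup) :
    X i k l j = 1 / (1 - X i j k l) := by
  simp only [List.nodup_cons, List.mem_cons, List.not_mem_nil, or_false, not_or] at hd
  obtain ⟨⟨h1, h2, h3⟩, ⟨h4, h5⟩, h6, -⟩ := hd
  exact h.sim i k l j h2 h3 h1 h6 (Ne.symm h4) (Ne.symm h5)

lemma rot' (h : FivePointRatio X) {i j k l : Fin 5} (hd : [i, j, k, l].Nodup) :
    X i l j k = 1 - 1 / X i j k l := by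
  simp only [List.nodup_cons, List.mem_cons, List.not_mem_nil, or_false, not_or] at hd
  obtain ⟨⟨h1, h2, h3⟩, ⟨h4, h5⟩, h6, -⟩ := hd
  rw [h.sim i j k l h1 h2 h3 h4 h5 h6]
  simp

/-- With the normalisation `t a = 0`, `t b = 1`, one has `t c = X i a b c` and `t d = X i a b d`,
and the right-hand side is `(t c - t d) / (t b - t d)`. -/
lemma fourth (h : FivePointRatio X) {i a b c d : Fin 5} (hd : [i, a, b, c, d].Nodup) :
    X i d b c = (X i a b c - X i a b d) / (1 - X i a b d) := by
  simp only [List.nodup_cons, List.mem_cons, List.not_mem_nil, or_false, not_or] at hd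
  obtain ⟨⟨h1, h2, h3, h4⟩, ⟨h5, h6, h7⟩, ⟨h8, h9⟩, h10, -⟩ := hd
  have e1 := h.edge i d b c a h4 h2 h3 h1 (Ne.symm h9) (Ne.symm h10) (Ne.symm h7) h8
    (Ne.symm h5) (Ne.symm h6)
  have e2 := h.edge i a c d b h1 h3 h4 h2 h6 h7 h5 h10 (Ne.symm h8) (Ne.symm h9)
  have e3 : X i a c b = 1 / X i a b c := h.swap (by simp; tauto)
  have e4 : X i a d b = 1 / X i a b d := h.swap (by simp; tauto)
  have e5 : X i d b a = 1 / (1 - X i a d b) := h.rot (by simp; tauto)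
  have e6 : X i d a c = 1 - 1 / X i a c d := h.rot' (by simp; tauto)
  obtain ⟨u0, -⟩ := h.val i a b c h1 h2 h3 h5 h6 h8
  obtain ⟨v0, v1⟩ := h.val i a b d h1 h2 h4 h5 h7 h9
  have v2 : 1 - X i a b d ≠ 0 := sub_ne_zero.2 v1.symm
  have v3 : X i a b d - 1 ≠ 0 := sub_ne_zero.2 v1
  rw [e1, e5, e6, e2, e3, e4]
  field_simp
  ring

/-- The relations are invariant under relabelling the five points. -/
lemma relabel (h : FivePointRatio X) (σ : Equiv.Perm (Fin 5)) :
    FivePointRatio (fun i j k l => X (σ i) (σ j) (σ k) (σ l)) where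
  val i j k l := by simpa using h.val (σ i) (σ j) (σ k) (σ l)
  inv i j k l := by simpa using h.inv (σ i) (σ j) (σ k) (σ l)
  sim i j k l := by simpa using h.sim (σ i) (σ j) (σ k) (σ l)
  edge i j k l m := by simpa using h.edge (σ i) (σ j) (σ k) (σ l) (σ m)
  face i j k l m := by simpa using h.face (σ i) (σ j) (σ k) (σ l) (σ m)

/-- The face relation on `{0, 1, 2}` in terms of the coordinates, with denominators cleared. -/
lemma face_012 (h : FivePointRatio X) :
    X 2 4 0 1 * (X 0 1 2 3 * (X 0 1 2 4 - 1) * (X 1 0 3 2 - 1)) =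
      X 0 1 2 4 * X 2 3 0 1 * (X 1 0 4 2 - 1) * (X 0 1 2 3 - 1) := by
  have f := h.face 2 3 0 1 4 (by decide) (by decide) (by decide) (by decide) (by decide)
    (by decide) (by decide) (by decide) (by decide) (by decide)
  have a1 : X 1 3 2 0 = 1 / (1 - X 1 0 3 2) := h.rot (by decide)
  have a2 : X 0 3 1 2 = 1 - 1 / X 0 1 2 3 := h.rot' (by decide)
  have b1 : X 1 4 2 0 = 1 / (1 - X 1 0 4 2) := h.rot (by decide)
  have b2 : X 0 4 1 2 = 1 - 1 / X 0 1 2 4 := h.rot' (by decide)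
  rw [a1, a2, b1, b2] at f
  obtain ⟨n1, -⟩ := h.val 0 1 2 3 (by decide) (by decide) (by decide) (by decide) (by decide)
    (by decide)
  obtain ⟨n2, -⟩ := h.val 0 1 2 4 (by decide) (by decide) (by decide) (by decide) (by decide)
    (by decide)
  obtain ⟨-, n3⟩ := h.val 1 0 3 2 (by decide) (by decide) (by decide) (by decide) (by decide)
    (by decide)
  obtain ⟨-, n4⟩ := h.val 1 0 4 2 (by decide) (by decide) (by decide) (by decide) (by decide)
    (by decide)
  have n3' := sub_ne_zero.2 n3.symm
  have n4' := sub_ne_zero.2 n4.symm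
  field_simp at f
  linear_combination f

/-- The face relation on `{1, 2, 3}` in terms of the coordinates, with denominators cleared. -/
lemma face_123 (h : FivePointRatio X) (hne : X 2 3 0 1 - X 2 4 0 1 ≠ 0) :
    X 3 4 1 2 * (X 2 4 0 1 * (X 3 2 1 0 - 1) * (X 1 0 4 2 - X 1 0 3 2)) =
      X 3 2 1 0 * (X 2 4 0 1 - X 2 3 0 1) * (X 1 0 4 2 - 1) := by
  have f := h.face 3 4 1 2 0 (by decide) (by decide) (by decide) (by decide) (by decide)
    (by decide) (by decide) (by decide) (by decide) (by decide)
  have a1 : X 2 4 3 1 = (X 2 0 3 1 - X 2 0 3 4) / (1 - X 2 0 3 4) := h.fourth (by decide)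
  have a2 : X 1 4 2 3 = (X 1 0 2 3 - X 1 0 2 4) / (1 - X 1 0 2 4) := h.fourth (by decide)
  have a3 : X 1 0 2 3 = 1 / X 1 0 3 2 := h.swap (by decide)
  have a4 : X 1 0 2 4 = 1 / X 1 0 4 2 := h.swap (by decide)
  have a5 : X 3 2 0 1 = 1 / X 3 2 1 0 := h.swap (by decide)
  have a6 : X 3 0 1 2 = 1 / (1 - X 3 2 0 1) := h.rot (by decide)
  have a7 := h.edge 2 0 3 4 1 (by decide) (by decide) (by decide) (by decide) (by decide)
    (by decide) (by decide) (by decide) (by decide) (by decide)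
  have a8 : X 2 0 1 4 = 1 / (1 - X 2 4 0 1) := h.rot (by decide)
  have a9 : X 2 0 1 3 = 1 / (1 - X 2 3 0 1) := h.rot (by decide)
  have a10 : X 2 0 3 1 = 1 / X 2 0 1 3 := h.swap (by decide)
  obtain ⟨n1, n2⟩ := h.val 3 2 1 0 (by decide) (by decide) (by decide) (by decide) (by decide)
    (by decide)
  obtain ⟨n3, -⟩ := h.val 1 0 3 2 (by decide) (by decide) (by decide) (by decide) (by decide)
    (by decide)
  obtain ⟨n4, n5⟩ := h.val 1 0 4 2 (by decide) (by decide) (by decide) (by decide) (by decide)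
    (by decide)
  obtain ⟨-, n6⟩ := h.val 2 3 0 1 (by decide) (by decide) (by decide) (by decide) (by decide)
    (by decide)
  obtain ⟨-, n7⟩ := h.val 2 4 0 1 (by decide) (by decide) (by decide) (by decide) (by decide)
    (by decide)
  rw [a1, a2, a6, a5, a3, a4, a7, a10, a8, a9] at f
  generalize X 2 3 0 1 = x3 at *
  generalize X 2 4 0 1 = y3 at *
  generalize X 1 0 3 2 = x2 at *
  generalize X 1 0 4 2 = y2 at *
  generalize X 3 2 1 0 = x4 at *
  generalize X 3 4 1 2 = z3 at *
  have n2' := sub_ne_zero.2 n2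
  have n5' := sub_ne_zero.2 n5
  have n6' := sub_ne_zero.2 n6.symm
  have n7' := sub_ne_zero.2 n7.symm
  have r1 : (1 / (1 / (1 - x3)) - 1 / (1 / (1 - x3)) * (1 / (1 - y3))) /
      (1 - 1 / (1 / (1 - x3)) * (1 / (1 - y3))) = - y3 * (1 - x3) / (x3 - y3) := by
    have e : 1 - 1 / (1 / (1 - x3)) * (1 / (1 - y3)) = (x3 - y3) / (1 - y3) := by
      field_simp
      ring
    rw [e]
    field_simp
    ring
  have r2 : (1 / x2 - 1 / y2) / (1 - 1 / y2) = (y2 - x2) / (x2 * (y2 - 1)) := by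
    field_simp
  have r3 : 1 / (1 - 1 / x4) = x4 / (x4 - 1) := by
    field_simp
  rw [r1, r2, r3] at f
  field_simp at f
  linear_combination -f

/-- The face relation on `{0, 2, 3}` in terms of the coordinates, with denominators cleared. -/
lemma face_023 (h : FivePointRatio X) (hne : X 2 3 0 1 - X 2 4 0 1 ≠ 0) :
    X 3 4 0 2 * (X 2 3 0 1 * (X 3 2 1 0 - 1) * (X 0 1 2 3 - X 0 1 2 4)) =
      X 0 1 2 3 * (X 2 3 0 1 - X 2 4 0 1) * (X 0 1 2 4 - 1) := by
  have f := h.face 3 4 0 2 1 (by decide) (by decide) (by decide) (by decide) (by decide)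
    (by decide) (by decide) (by decide) (by decide) (by decide)
  have a1 : X 2 4 3 0 = (X 2 1 3 0 - X 2 1 3 4) / (1 - X 2 1 3 4) := h.fourth (by decide)
  have a2 : X 0 4 2 3 = (X 0 1 2 3 - X 0 1 2 4) / (1 - X 0 1 2 4) := h.fourth (by decide)
  have a3 : X 3 1 0 2 = 1 / (1 - X 3 2 1 0) := h.rot (by decide)
  have a4 := h.edge 2 1 3 4 0 (by decide) (by decide) (by decide) (by decide) (by decide)
    (by decide) (by decide) (by decide) (by decide) (by decide)
  have a5 : X 2 1 3 0 = 1 - 1 / X 2 3 0 1 := h.rot' (by decide)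
  have a6 : X 2 1 4 0 = 1 - 1 / X 2 4 0 1 := h.rot' (by decide)
  have a7 : X 2 1 0 4 = 1 / X 2 1 4 0 := h.swap (by decide)
  obtain ⟨-, n1⟩ := h.val 3 2 1 0 (by decide) (by decide) (by decide) (by decide) (by decide)
    (by decide)
  obtain ⟨-, n2⟩ := h.val 0 1 2 4 (by decide) (by decide) (by decide) (by decide) (by decide)
    (by decide)
  obtain ⟨n3, n4⟩ := h.val 2 3 0 1 (by decide) (by decide) (by decide) (by decide) (by decide)
    (by decide)
  obtain ⟨n5, n6⟩ := h.val 2 4 0 1 (by decide) (by decide) (by decide) (by decide) (by decide)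
    (by decide)
  rw [a1, a2, a3, a4, a7, a5, a6] at f
  generalize X 2 3 0 1 = x3 at *
  generalize X 2 4 0 1 = y3 at *
  generalize X 0 1 2 3 = x1 at *
  generalize X 0 1 2 4 = y1 at *
  generalize X 3 2 1 0 = x4 at *
  generalize X 3 4 0 2 = w3 at *
  have n1' := sub_ne_zero.2 n1.symm
  have n2' := sub_ne_zero.2 n2.symm
  have n4' := sub_ne_zero.2 n4
  have n6' := sub_ne_zero.2 n6
  have r1 : (1 - 1 / x3 - (1 - 1 / x3) * (1 / (1 - 1 / y3))) /
      (1 - (1 - 1 / x3) * (1 / (1 - 1 / y3))) = (x3 - 1) / (x3 - y3) := by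
    have e : 1 - (1 - 1 / x3) * (1 / (1 - 1 / y3)) = (y3 - x3) / (x3 * (y3 - 1)) := by
      field_simp
      ring
    have hne' : y3 - x3 ≠ 0 := fun h0 => hne (by linear_combination -h0)
    rw [e]
    field_simp
    ring
  rw [r1] at f
  field_simp at f
  linear_combination -f

/-- The formulas for `z3 = X 3 4 1 2` and `w3 = X 3 4 0 2`, written without division. The face
relation on `{0, 1, 2}` eliminates the ratios at vertex `2`. -/
lemma formulas (h : FivePointRatio X) {x1 x2 x4 y1 y2 P : ℂ}
    (hx1 : x1 = X 0 1 2 3) (hx2 : x2 = X 1 0 3 2) (hx4 : x4 = X 3 2 1 0)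
    (hy1 : y1 = X 0 1 2 4) (hy2 : y2 = X 1 0 4 2)
    (hP : P = -y1 * x1 * y2 - x1 * x2 + y1 * x1 * x2 + x1 + y1 * y2 - y1) (hPne : P ≠ 0) :
    X 3 4 1 2 * (y1 * (x4 - 1) * (x2 - y2) * (x1 - 1)) = x4 * P ∧
    X 3 4 0 2 * ((x4 - 1) * (x1 - y1) * (x2 - 1)) = P := by
  have e := h.face_012
  obtain ⟨n1, -⟩ := h.val 0 1 2 3 (by decide) (by decide) (by decide) (by decide) (by decide)
    (by decide)
  obtain ⟨-, n2⟩ := h.val 0 1 2 4 (by decide) (by decide) (by decide) (by decide) (by decide)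
    (by decide)
  obtain ⟨n3, -⟩ := h.val 2 3 0 1 (by decide) (by decide) (by decide) (by decide) (by decide)
    (by decide)
  obtain ⟨n4, -⟩ := h.val 2 4 0 1 (by decide) (by decide) (by decide) (by decide) (by decide)
    (by decide)
  have hne : X 2 3 0 1 - X 2 4 0 1 ≠ 0 := by
    intro h0
    rw [← hx1, ← hx2, ← hy1, ← hy2] at e
    -- If `y3 = x3`, the relation on `{0, 1, 2}` reads `x3 * P = 0`.
    have : X 2 3 0 1 * P = 0 := by
      linear_combination X 2 3 0 1 * hP + e + (x1 * (y1 - 1) * (x2 - 1)) * h0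
    exact (mul_ne_zero n3 hPne) this
  have f := h.face_123 hne
  have g := h.face_023 hne
  rw [← hx1, ← hy1] at g e
  rw [← hx2, ← hy2] at f e
  rw [← hx4] at f g
  rw [← hx1] at n1
  rw [← hy1] at n2
  have n2' := sub_ne_zero.2 n2
  constructor
  · apply mul_left_cancel₀ n4
    linear_combination (-y1 * (x1 - 1)) * f - x4 * e - (X 2 4 0 1 * x4) * hP
  · apply mul_left_cancel₀ (mul_ne_zero (mul_ne_zero n1 n2') n3)
    linear_combination (x1 * (y1 - 1) * (x2 - 1)) * g - x1 * (y1 - 1) * e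
      - x1 * (y1 - 1) * X 2 3 0 1 * hP

end FivePointRatio


/-- Proposition 2 of the paper: for a cross-ratio structure on five points
(indices `0,…,4` of `Fin 5` standing for the points `p₁,…,p₅`) satisfying the
inverse, similarity, edge and face compatibility relations, the invariants
`y3, z3, w3, z4, w4` are determined by the seven coordinates
`x1,x2,x3,x4,y1,y2,y4`. -/
theorem five_points_edge_face_compatibility
    (X : Fin 5 → Fin 5 → Fin 5 → Fin 5 → ℂ)
    (hval : ∀ i j k l : Fin 5, i ≠ j → i ≠ k → i ≠ l → j ≠ k → j ≠ l → k ≠ l →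
      X i j k l ≠ 0 ∧ X i j k l ≠ 1)
    (hinv : ∀ i j k l : Fin 5, i ≠ j → i ≠ k → i ≠ l → j ≠ k → j ≠ l → k ≠ l →
      X i j k l * X i j l k = 1)
    (hsim : ∀ i j k l : Fin 5, i ≠ j → i ≠ k → i ≠ l → j ≠ k → j ≠ l → k ≠ l →
      X i j k l = 1 / (1 - X i l j k))
    (hedge : ∀ i j k l m : Fin 5, i ≠ j → i ≠ k → i ≠ l → i ≠ m → j ≠ k → j ≠ l →
      j ≠ m → k ≠ l → k ≠ m → l ≠ m →
      X i j k l = X i j k m * X i j m l)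
    (hface : ∀ i j k l m : Fin 5, i ≠ j → i ≠ k → i ≠ l → i ≠ m → j ≠ k → j ≠ l →
      j ≠ m → k ≠ l → k ≠ m → l ≠ m →
      X i j k l * X l j i k * X k j l i = X i m k l * X l m i k * X k m l i)
    (x1 x2 x3 x4 y1 y2 y3 y4 z3 w3 z4 w4 P : ℂ)
    (hx1 : x1 = X 0 1 2 3)  -- x1 = X(1,2,3,4)
    (hx2 : x2 = X 1 0 3 2)  -- x2 = X(2,1,4,3)
    (hx3 : x3 = X 2 3 0 1)  -- x3 = X(3,4,1,2)
    (hx4 : x4 = X 3 2 1 0)  -- x4 = X(4,3,2,1)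
    (hy1 : y1 = X 0 1 2 4)  -- y1 = X(1,2,3,5)
    (hy2 : y2 = X 1 0 4 2)  -- y2 = X(2,1,5,3)
    (hy3 : y3 = X 2 4 0 1)  -- y3 = X(3,5,1,2)
    (hy4 : y4 = X 4 2 1 0)  -- y4 = X(5,3,2,1)
    (hz3 : z3 = X 3 4 1 2)  -- z3 = X(4,5,2,3)
    (hw3 : w3 = X 3 4 0 2)  -- w3 = X(4,5,1,3)
    (hz4 : z4 = X 4 3 2 1)  -- z4 = X(5,4,3,2)
    (hw4 : w4 = X 4 3 2 0)  -- w4 = X(5,4,3,1)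
    (hP : P = -y1 * x1 * y2 - x1 * x2 + y1 * x1 * x2 + x1 + y1 * y2 - y1)
    (hx1y1 : x1 ≠ y1) (hx2y2 : x2 ≠ y2) (hPne : P ≠ 0) :
    y3 = y1 * x3 * (y2 - 1) * (x1 - 1) / (x1 * (y1 - 1) * (x2 - 1)) ∧
    z3 = x4 * P / (y1 * (x4 - 1) * (x2 - y2) * (x1 - 1)) ∧
    w3 = P / ((x4 - 1) * (x1 - y1) * (x2 - 1)) ∧
    z4 = x1 * (y4 - 1) * (y1 - 1) * (x2 - y2) / (y4 * P) ∧
    w4 = (y4 - 1) * (y2 - 1) * (x1 - y1) / P := by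
  have h : FivePointRatio X := ⟨hval, hinv, hsim, hedge, hface⟩
  have nz : ∀ i j k l : Fin 5, [i, j, k, l].Nodup → X i j k l ≠ 0 ∧ X i j k l - 1 ≠ 0 := by
    intro i j k l hd
    simp only [List.nodup_cons, List.mem_cons, List.not_mem_nil, or_false, not_or] at hd
    obtain ⟨⟨h1, h2, h3⟩, ⟨h4, h5⟩, h6, -⟩ := hd
    exact ⟨(hval i j k l h1 h2 h3 h4 h5 h6).1, sub_ne_zero.2 (hval i j k l h1 h2 h3 h4 h5 h6).2⟩
  have e := h.face_012
  obtain ⟨f, g⟩ := h.formulas hx1 hx2 hx4 hy1 hy2 hP hPne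
  -- Exchanging the points `3` and `4` exchanges `x` and `y` and replaces `P` by `-P`.
  obtain ⟨f', g'⟩ := (h.relabel (Equiv.swap 3 4)).formulas (x1 := y1) (x2 := y2) (x4 := y4)
    (y1 := x1) (y2 := x2) (P := -P) hy1 hy2 hy4 hx1 hx2 (by rw [hP]; ring) (neg_ne_zero.2 hPne)
  have f'' : X 4 3 1 2 * (x1 * (y4 - 1) * (y2 - x2) * (y1 - 1)) = y4 * -P := f'
  have g'' : X 4 3 0 2 * ((y4 - 1) * (y1 - x1) * (y2 - 1)) = -P := g'
  have z : z4 * X 4 3 1 2 = 1 := by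
    rw [hz4]
    exact hinv 4 3 2 1 (by decide) (by decide) (by decide) (by decide) (by decide) (by decide)
  have w : w4 * X 4 3 0 2 = 1 := by
    rw [hw4]
    exact hinv 4 3 2 0 (by decide) (by decide) (by decide) (by decide) (by decide) (by decide)
  rw [← hx1, ← hx2, ← hy1, ← hy2, ← hx3, ← hy3] at e
  rw [← hz3] at f
  rw [← hw3] at g
  have a1 := nz 0 1 2 3 (by decide)
  have a2 := nz 1 0 3 2 (by decide)
  have a4 := nz 3 2 1 0 (by decide)
  have b1 := nz 0 1 2 4 (by decide)
  have b4 := nz 4 2 1 0 (by decide)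
  rw [← hx1] at a1
  rw [← hx2] at a2
  rw [← hx4] at a4
  rw [← hy1] at b1
  rw [← hy4] at b4
  have c1 := sub_ne_zero.2 hx1y1
  have c2 := sub_ne_zero.2 hx2y2
  refine ⟨?_, ?_, ?_, ?_, ?_⟩
  · rw [eq_div_iff (mul_ne_zero (mul_ne_zero a1.1 b1.2) a2.2)]
    exact e
  · rw [eq_div_iff (mul_ne_zero (mul_ne_zero (mul_ne_zero b1.1 a4.2) c2) a1.2)]
    exact f
  · rw [eq_div_iff (mul_ne_zero (mul_ne_zero a4.2 c1) a2.2)]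
    exact g
  · rw [eq_div_iff (mul_ne_zero b4.1 hPne)]
    linear_combination z4 * f'' - (x1 * (y4 - 1) * (y2 - x2) * (y1 - 1)) * z
  · rw [eq_div_iff hPne]
    linear_combination w4 * g'' - ((y4 - 1) * (y1 - x1) * (y2 - 1)) * w
end

section
/- Let D : ℂ → ℝ satisfy the five-term relation D(x) − D(y) + D(y/x) − D((1−y)/(1−x)) + D((1−1/y)/(1−1/x)) = 0 for all x, y ∈ ℂ∖{0,1} with x ≠ y, together with D(1/z) = −D(z) and D(1−z) = −D(z) for all z ∈ ℂ∖{0,1}. Let x1, x2, x3, x4, y1, y2, y4 ∈ ℂ∖{0,1} with x1 ≠ y1, x2 ≠ y2, and P := −y1·x1·y2 − x1·x2 + y1·x1·x2 + x1 + y1·y2 − y1 ≠ 0, and define y3 = y1·x3·(y2−1)(x1−1)/(x1(y1−1)(x2−1)), z3 = x4·P/(y1(x4−1)(x2−y2)(x1−1)), w3 = P/((x4−1)(x1−y1)(x2−1)), z4 = x1(y4−1)(y1−1)(x2−y2)/(y4·P), w4 = (y4−1)(y2−1)(x1−y1)/P. Assume (genericity) that y3, z3, w3, z4, w4 and the quantities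 y1/x1, y2/x2, w3/z3, w4/z4, (1−y1)/(1−x1), (1−y3)/(1−x3), x2(1−y2)/(y2(1−x2)), x3(1−y3)/(y3(1−x3)) all lie in ℂ∖{0,1}, and that x3 ≠ y3, x4 ≠ y4, z3 ≠ w3, z4 ≠ w4 and (1−1/y1)/(1−1/x1) ≠ (1−y2)/(1−x2). Then [D(x1)+D(x2)+D(x3)+D(x4)] − [D(y1)+D(y2)+D(y3)+D(y4)] + [D(y1/x1)+D(y2/x2)+D(w3/z3)+D(w4/z4)] − [D((1−y1)/(1−x1))+D((1−y3)/(1−x3))+D(w3)+D(w4)] + [D(x2(1−y2)/(y2(1−x2)))+D(x3(1−y3)/(y3(1−x3)))+D(z3)+D(z4)] = 0. -/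
/-!
Write `F(x, y)` for the hypothesis `hfive` at `(x, y)`. The claim is the sum of six instances,

  `F(x1, y1) + F(x2, y2) + F(x3, y3) + F(a, b) + F(x4, c) + F(d, y4)`,

where `a = (1 - 1/y1)/(1 - 1/x1)`, `b = (1 - y2)/(1 - x2)`, and `c = (1 - b)/(1 - a)`,
`d = (1 - 1/b)/(1 - 1/a)` are the last two arguments in `F(a, b)`. The defining equations of
`y3, z3, w3, z4, w4` say exactly that

* `y3/x3 = b/a`,
* `w3/z3 = c/x4`, `w3 = (1 - c)/(1 - x4)`, `z3 = (1 - 1/c)/(1 - 1/x4)`,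
* `w4/z4 = y4/d`, `w4 = (1 - y4)/(1 - d)`, `z4 = (1 - 1/y4)/(1 - 1/d)`,

so all terms in `D a`, `D b`, `D c`, `D d`, `D (b/a)` cancel. The last two lines rest on
`1 - c` and `1 - d` being multiples of `P` (`one_sub_c`, `one_sub_d`), which is also why
`P ≠ 0` is what makes `c` and `d` differ from `1`.
-/

/-- `1 - c` is a multiple of `P`, where `c` is given in closed form. -/
theorem one_sub_c {x1 x2 y1 y2 : ℂ} (hx2' : x2 - 1 ≠ 0) (h1 : x1 - y1 ≠ 0) :
    1 - (x2 - y2) * y1 * (x1 - 1) / ((x2 - 1) * (x1 - y1)) =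
      -(-y1 * x1 * y2 - x1 * x2 + y1 * x1 * x2 + x1 + y1 * y2 - y1)
        / ((x2 - 1) * (x1 - y1)) := by
  field_simp
  ring

/-- `1 - d` is a multiple of `P`, where `d` is given in closed form. -/
theorem one_sub_d {x1 x2 y1 y2 : ℂ} (hy2' : y2 - 1 ≠ 0) (h1 : x1 - y1 ≠ 0) :
    1 - x1 * (y1 - 1) * (x2 - y2) / ((y2 - 1) * (x1 - y1)) =
      -(-y1 * x1 * y2 - x1 * x2 + y1 * x1 * x2 + x1 + y1 * y2 - y1)
        / ((y2 - 1) * (x1 - y1)) := by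
  field_simp
  ring

/-- Theorem 5.1 of the paper: the volume function 𝒟 of cross-ratio structures,
built from any function `D` satisfying the five-term relation and the
symmetries `D(1/z) = -D(z)`, `D(1-z) = -D(z)`, satisfies the five-term
relation on the five simplices of a configuration of five points, whose
invariants are expressed via Proposition 2 in the coordinates
`x1,x2,x3,x4,y1,y2,y4`. -/
theorem volume_five_term_relation
    (D : ℂ → ℝ)
    (hfive : ∀ x y : ℂ, x ≠ 0 → x ≠ 1 → y ≠ 0 → y ≠ 1 → x ≠ y →
      D x - D y + D (y / x) - D ((1 - y) / (1 - x)) + D ((1 - 1 / y) / (1 - 1 / x)) = 0)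
    (hDinv : ∀ z : ℂ, z ≠ 0 → z ≠ 1 → D (1 / z) = -D z)
    (hDone : ∀ z : ℂ, z ≠ 0 → z ≠ 1 → D (1 - z) = -D z)
    (x1 x2 x3 x4 y1 y2 y4 y3 z3 w3 z4 w4 P : ℂ)
    (hx1 : x1 ≠ 0) (hx1' : x1 ≠ 1) (hx2 : x2 ≠ 0) (hx2' : x2 ≠ 1)
    (hx3 : x3 ≠ 0) (hx3' : x3 ≠ 1) (hx4 : x4 ≠ 0) (hx4' : x4 ≠ 1)
    (hy1 : y1 ≠ 0) (hy1' : y1 ≠ 1) (hy2 : y2 ≠ 0) (hy2' : y2 ≠ 1)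
    (hy4 : y4 ≠ 0) (hy4' : y4 ≠ 1)
    (hx1y1 : x1 ≠ y1) (hx2y2 : x2 ≠ y2)
    (hP : P = -y1 * x1 * y2 - x1 * x2 + y1 * x1 * x2 + x1 + y1 * y2 - y1)
    (hPne : P ≠ 0)
    (hy3 : y3 = y1 * x3 * (y2 - 1) * (x1 - 1) / (x1 * (y1 - 1) * (x2 - 1)))
    (hz3 : z3 = x4 * P / (y1 * (x4 - 1) * (x2 - y2) * (x1 - 1)))
    (hw3 : w3 = P / ((x4 - 1) * (x1 - y1) * (x2 - 1)))
    (hz4 : z4 = x1 * (y4 - 1) * (y1 - 1) * (x2 - y2) / (y4 * P))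
    (hw4 : w4 = (y4 - 1) * (y2 - 1) * (x1 - y1) / P)
    -- genericity assumptions
    (hy3g : y3 ≠ 0) (hy3g' : y3 ≠ 1)
    (hz3g : z3 ≠ 0) (hz3g' : z3 ≠ 1)
    (hw3g : w3 ≠ 0) (hw3g' : w3 ≠ 1)
    (hz4g : z4 ≠ 0) (hz4g' : z4 ≠ 1)
    (hw4g : w4 ≠ 0) (hw4g' : w4 ≠ 1)
    (hq1 : y1 / x1 ≠ 0) (hq1' : y1 / x1 ≠ 1)
    (hq2 : y2 / x2 ≠ 0) (hq2' : y2 / x2 ≠ 1)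
    (hq3 : w3 / z3 ≠ 0) (hq3' : w3 / z3 ≠ 1)
    (hq4 : w4 / z4 ≠ 0) (hq4' : w4 / z4 ≠ 1)
    (hq5 : (1 - y1) / (1 - x1) ≠ 0) (hq5' : (1 - y1) / (1 - x1) ≠ 1)
    (hq6 : (1 - y3) / (1 - x3) ≠ 0) (hq6' : (1 - y3) / (1 - x3) ≠ 1)
    (hq7 : x2 * (1 - y2) / (y2 * (1 - x2)) ≠ 0) (hq7' : x2 * (1 - y2) / (y2 * (1 - x2)) ≠ 1)
    (hq8 : x3 * (1 - y3) / (y3 * (1 - x3)) ≠ 0) (hq8' : x3 * (1 - y3) / (y3 * (1 - x3)) ≠ 1)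
    (hx3y3 : x3 ≠ y3) (hx4y4 : x4 ≠ y4) (hz3w3 : z3 ≠ w3) (hz4w4 : z4 ≠ w4)
    (hab : (1 - 1 / y1) / (1 - 1 / x1) ≠ (1 - y2) / (1 - x2)) :
    (D x1 + D x2 + D x3 + D x4)
      - (D y1 + D y2 + D y3 + D y4)
      + (D (y1 / x1) + D (y2 / x2) + D (w3 / z3) + D (w4 / z4))
      - (D ((1 - y1) / (1 - x1)) + D ((1 - y3) / (1 - x3)) + D w3 + D w4)
      + (D (x2 * (1 - y2) / (y2 * (1 - x2))) + D (x3 * (1 - y3) / (y3 * (1 - x3)))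
          + D z3 + D z4) = 0 := by
  have x1' := sub_ne_zero.2 hx1'
  have x2' := sub_ne_zero.2 hx2'
  have x3' := sub_ne_zero.2 hx3'
  have x4' := sub_ne_zero.2 hx4'
  have y1' := sub_ne_zero.2 hy1'
  have y2' := sub_ne_zero.2 hy2'
  have y3' := sub_ne_zero.2 hy3g'
  have y4' := sub_ne_zero.2 hy4'
  have s1 := sub_ne_zero.2 hx1y1
  have s2 := sub_ne_zero.2 hx2y2
  have key {x y : ℂ} (hx : x ≠ 0) (hx' : x - 1 ≠ 0) (hy : y ≠ 0) :
      (1 - 1 / y) / (1 - 1 / x) = x * (1 - y) / (y * (1 - x)) := by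
    have : 1 - x ≠ 0 := sub_ne_zero.2 (sub_ne_zero.1 hx').symm
    rw [one_sub_div hy, one_sub_div hx, ← neg_sub 1 y, ← neg_sub 1 x]
    field_simp
  obtain ⟨a, ha⟩ : ∃ a, a = (1 - 1 / y1) / (1 - 1 / x1) := ⟨_, rfl⟩
  obtain ⟨b, hb⟩ : ∃ b, b = (1 - y2) / (1 - x2) := ⟨_, rfl⟩
  obtain ⟨c, hc⟩ : ∃ c, c = (x2 - y2) * y1 * (x1 - 1) / ((x2 - 1) * (x1 - y1)) := ⟨_, rfl⟩
  obtain ⟨d, hd⟩ : ∃ d, d = x1 * (y1 - 1) * (x2 - y2) / ((y2 - 1) * (x1 - y1)) := ⟨_, rfl⟩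
  have ha_eq : a = x1 * (y1 - 1) / (y1 * (x1 - 1)) := by
    rw [ha, key hx1 x1' hy1, ← neg_sub y1 1, ← neg_sub x1 1]
    field_simp
  have hb_eq : b = (y2 - 1) / (x2 - 1) := by
    rw [hb, ← neg_sub y2 1, ← neg_sub x2 1, neg_div_neg_eq]
  have a0 : a ≠ 0 := by rw [ha_eq]; positivity
  have b0 : b ≠ 0 := by rw [hb_eq]; positivity
  have c0 : c ≠ 0 := by rw [hc]; positivity
  have d0 : d ≠ 0 := by rw [hd]; positivity
  have ha1 : 1 - a = (x1 - y1) / (y1 * (x1 - 1)) := by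
    rw [ha_eq]; field_simp; ring
  have hb1 : 1 - b = (x2 - y2) / (x2 - 1) := by
    rw [hb_eq]; field_simp; ring
  have hc1 : 1 - c = -P / ((x2 - 1) * (x1 - y1)) := by
    rw [hc, hP, one_sub_c x2' s1]
  have hd1 : 1 - d = -P / ((y2 - 1) * (x1 - y1)) := by
    rw [hd, hP, one_sub_d y2' s1]
  have a1 : a ≠ 1 := (sub_ne_zero.1 (by rw [ha1]; positivity)).symm
  have b1 : b ≠ 1 := (sub_ne_zero.1 (by rw [hb1]; positivity)).symm
  have nP : -P ≠ 0 := neg_ne_zero.2 hPne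
  have c1 : c ≠ 1 := (sub_ne_zero.1 (by rw [hc1]; positivity)).symm
  have d1 : d ≠ 1 := (sub_ne_zero.1 (by rw [hd1]; positivity)).symm
  have e1 : b / a = y3 / x3 := by
    rw [hb_eq, ha_eq, hy3]; field_simp
  have e2 : (1 - b) / (1 - a) = c := by
    rw [hb1, ha1, hc]; field_simp
  have e3 : (1 - 1 / b) / (1 - 1 / a) = d := by
    rw [key a0 (sub_ne_zero.2 a1) b0, hb1, ha1, hb_eq, ha_eq, hd]; field_simp
  have e4 : c / x4 = w3 / z3 := by
    rw [hc, hw3, hz3]; field_simp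
  have e5 : (1 - c) / (1 - x4) = w3 := by
    rw [hc1, hw3, ← neg_sub x4 1]; field_simp
  have e6 : (1 - 1 / c) / (1 - 1 / x4) = z3 := by
    rw [key hx4 x4' c0, hc1, hc, hz3, ← neg_sub x4 1]; field_simp
  have e7 : y4 / d = w4 / z4 := by
    rw [hd, hw4, hz4]; field_simp
  have e8 : (1 - y4) / (1 - d) = w4 := by
    rw [hd1, hw4, ← neg_sub y4 1]; field_simp
  have e9 : (1 - 1 / y4) / (1 - 1 / d) = z4 := by
    rw [key d0 (sub_ne_zero.2 d1) hy4, hd1, hd, hz4, ← neg_sub y4 1]; field_simp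
  have hx4c : x4 ≠ c := by
    rintro rfl
    exact hq3' (by rw [← e4, div_self hx4])
  have hdy4 : d ≠ y4 := by
    rintro rfl
    exact hq4' (by rw [← e7, div_self d0])
  have F1 := hfive x1 y1 hx1 hx1' hy1 hy1' hx1y1
  have F2 := hfive x2 y2 hx2 hx2' hy2 hy2' hx2y2
  have F3 := hfive x3 y3 hx3 hx3' hy3g hy3g' hx3y3
  have F4 := hfive a b a0 a1 b0 b1 (by rw [ha, hb]; exact hab)
  have F5 := hfive x4 c hx4 hx4' c0 c1 hx4c
  have F6 := hfive d y4 d0 d1 hy4 hy4' hdy4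
  rw [← ha] at F1
  rw [key hx2 x2' hy2, ← hb] at F2
  rw [key hx3 x3' hy3g] at F3
  rw [e1, e2, e3] at F4
  rw [e4, e5, e6] at F5
  rw [e7, e8, e9] at F6
  linarith
end

section
/- Let D : ℂ → ℝ satisfy the five-term relation D(x) − D(y) + D(y/x) − D((1−y)/(1−x)) + D((1−1/y)/(1−1/x)) = 0 for all x, y ∈ ℂ∖{0,1} with x ≠ y, together with D(1/z) = −D(z) and D(1−z) = −D(z) for all z ∈ ℂ∖{0,1}. Let z12, z21 ∈ ℂ∖{0,1} with z12·z21 ≠ 1, and set z34 = −z12(1−z21)/(1−z12) and z43 = −z21(1−z12)/(1−z21); assume z34, z43 ∈ ℂ∖{0,1}. Then D(z12·z21) = D(z12) + D(z21) + D(z34) + D(z43). -/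
/-- On hyperbolic configurations the volume function of Definition 5.1
coincides with the usual hyperbolic volume:
`D(z12·z21) = D(z12) + D(z21) + D(z34) + D(z43)` on the branch
`z34 = -z12(1-z21)/(1-z12)`, `z43 = -z21(1-z12)/(1-z21)`. -/
theorem volume_on_hyperbolic_branch
    (D : ℂ → ℝ)
    (hfive : ∀ x y : ℂ, x ≠ 0 → x ≠ 1 → y ≠ 0 → y ≠ 1 → x ≠ y →
      D x - D y + D (y / x) - D ((1 - y) / (1 - x)) + D ((1 - 1 / y) / (1 - 1 / x)) = 0)
    (hDinv : ∀ z : ℂ, z ≠ 0 → z ≠ 1 → D (1 / z) = -D z)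
    (hDone : ∀ z : ℂ, z ≠ 0 → z ≠ 1 → D (1 - z) = -D z)
    (z12 z21 z34 z43 : ℂ)
    (h12 : z12 ≠ 0) (h12' : z12 ≠ 1) (h21 : z21 ≠ 0) (h21' : z21 ≠ 1)
    (hprod : z12 * z21 ≠ 1)
    (hz34 : z34 = -z12 * (1 - z21) / (1 - z12))
    (hz43 : z43 = -z21 * (1 - z12) / (1 - z21))
    (h34 : z34 ≠ 0) (h34' : z34 ≠ 1) (h43 : z43 ≠ 0) (h43' : z43 ≠ 1) :
    D (z12 * z21) = D z12 + D z21 + D z34 + D z43 := by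
  have hs : (1 : ℂ) - z12 ≠ 0 := sub_ne_zero.mpr (Ne.symm h12')
  have ht : (1 : ℂ) - z21 ≠ 0 := sub_ne_zero.mpr (Ne.symm h21')
  -- The whole identity is the five-term relation at `x = 1 / z12`, `y = z21`, whose last three
  -- arguments are then `z12 * z21`, `z34` and `1 / z43`.
  have h5 := hfive (1 / z12) z21 (one_div_ne_zero h12)
    (fun h => h12' (by simpa using h)) h21 h21'
    (fun h => hprod (by rw [← h]; field_simp))
  have e1 : z21 / (1 / z12) = z12 * z21 := by field_simp
  have e2 : (1 - z21) / (1 - 1 / z12) = z34 := by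
    have : 1 - 1 / z12 = -(1 - z12) / z12 := by field_simp; ring
    rw [hz34, this]; field_simp
  have e3 : (1 - 1 / z21) / (1 - 1 / (1 / z12)) = 1 / z43 := by
    rw [hz43, one_div_one_div]; field_simp; ring
  rw [e1, e2, e3, hDinv z12 h12 h12', hDinv z43 h43 h43'] at h5
  linarith
end

section
/- Let g : ℝ → ℝ be differentiable and satisfy g(θ + π) = g(θ) for all θ ∈ ℝ. Suppose that g(θ1) + g(θ2) + g(θ3) = 0 for all θ1, θ2, θ3 ∈ ℝ with θ1 + θ2 + θ3 ∈ πℤ. Then g is identically zero. -/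
/-!
The triples `(0, 0, 0)`, `(x, -x, 0)` and `(x + y, -x, -y)` all sum to `0 ∈ πℤ`, so `g 0 = 0`, `g` is
odd, and hence `g` is additive. A continuous additive function `ℝ → ℝ` is `ℝ`-linear
(`AddMonoidHom.toRealLinearMap`), so `g θ = θ * g 1`; periodicity gives `π * g 1 = g π = g 0 = 0`,
whence `g 1 = 0`.
-/

/-- Uniqueness lemma: a differentiable π-periodic function `g : ℝ → ℝ` which sums
to zero over every triple of angles with `θ1 + θ2 + θ3 ≡ 0 (mod π)` vanishes
identically. -/
theorem periodic_triple_sum_zero (g : ℝ → ℝ)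
    (hdiff : Differentiable ℝ g)
    (hper : ∀ θ : ℝ, g (θ + Real.pi) = g θ)
    (hsum : ∀ θ1 θ2 θ3 : ℝ, (∃ n : ℤ, θ1 + θ2 + θ3 = n * Real.pi) →
      g θ1 + g θ2 + g θ3 = 0) :
    ∀ θ : ℝ, g θ = 0 := by
  have h0 : g 0 = 0 := by
    have := hsum 0 0 0 ⟨0, by simp⟩
    linarith
  have hodd : ∀ x, g (-x) = -g x := fun x => by
    have := hsum x (-x) 0 ⟨0, by simp⟩
    linarith
  have hadd : ∀ x y, g (x + y) = g x + g y := fun x y => by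
    have := hsum (x + y) (-x) (-y) ⟨0, by push_cast; ring⟩
    rw [hodd, hodd] at this
    linarith
  let f : ℝ →+ ℝ := AddMonoidHom.mk' g hadd
  let L : ℝ →L[ℝ] ℝ := f.toRealLinearMap hdiff.continuous
  have hlin : ∀ x, g x = x * g 1 := fun x => by
    have h : L (x • (1 : ℝ)) = x • L 1 := L.map_smul x 1
    rw [smul_eq_mul, smul_eq_mul, mul_one] at h
    exact h
  have hpi : Real.pi * g 1 = 0 := by
    rw [← hlin, ← h0, ← hper 0, zero_add]
  have h1 : g 1 = 0 := (mul_eq_zero.mp hpi).resolve_left Real.pi_ne_zero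
  intro θ
  rw [hlin, h1, mul_zero]
end

section
/- Equip ℂ³ with the Hermitian pairing ⟨z, w⟩ = z₁·conj(w₃) + z₂·conj(w₂) + z₃·conj(w₁) (the form given by the antidiagonal matrix J of signature (2,1)). Let p1, p2, p3, p4 ∈ ℂ³ be such that all the pairings ⟨pi, pj⟩ for i ≠ j are nonzero, and define the Koranyi–Reimann cross-ratio KR(p1,p2,p3,p4) = (⟨p4,p2⟩·⟨p3,p1⟩)/(⟨p3,p2⟩·⟨p4,p1⟩). Then KR(p1,p2,p3,p4)·KR(p1,p4,p2,p3)·KR(p1,p3,p4,p2) = w/conj(w), where w = ⟨p2,p3⟩·⟨p3,p4⟩·⟨p4,p2⟩; equivalently, the product of the three cross-ratios equals exp(2i·𝔸(p2,p3,p4)), where 𝔸(p2,p3,p4) = arg(−⟨p2,p3⟩⟨p3,p4⟩⟨p4,p2⟩) is the Cartan angular invariant. -/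
/-!
In the product of the three cross-ratios every pairing involving `p1` cancels, leaving
`⟨p2,p3⟩⟨p3,p4⟩⟨p4,p2⟩ / (⟨p3,p2⟩⟨p4,p3⟩⟨p2,p4⟩)`; by Hermitian symmetry (`conj_hermJ`) the
denominator is the conjugate of the numerator `w`. The polar form of `-w` then identifies
`w / conj w = (-w) / conj (-w)` with the exponential of twice its argument
(`div_conj_eq_exp_arg`).
-/

/-- The Hermitian pairing `⟨z,w⟩ = z₁·conj w₃ + z₂·conj w₂ + z₃·conj w₁` of
signature (2,1) on ℂ³, given by the antidiagonal matrix J. -/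
def hermJ (z w : Fin 3 → ℂ) : ℂ :=
  z 0 * (starRingEnd ℂ) (w 2) + z 1 * (starRingEnd ℂ) (w 1) + z 2 * (starRingEnd ℂ) (w 0)

/-- The Koranyi–Reimann cross-ratio of four vectors in ℂ³. -/
noncomputable def KR (p1 p2 p3 p4 : Fin 3 → ℂ) : ℂ :=
  hermJ p4 p2 * hermJ p3 p1 / (hermJ p3 p2 * hermJ p4 p1)

/-- Hermitian symmetry of the pairing. -/
theorem conj_hermJ (z w : Fin 3 → ℂ) : (starRingEnd ℂ) (hermJ z w) = hermJ w z := by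
  simp only [hermJ, map_add, map_mul, Complex.conj_conj]
  ring

/-- Writing `u = |u| e^{iθ}`, conjugation only flips the sign of `θ`, so the quotient is
`e^{2iθ}`. -/
theorem div_conj_eq_exp_arg {u : ℂ} (hu : u ≠ 0) :
    u / (starRingEnd ℂ) u = Complex.exp (2 * Complex.I * (u.arg : ℂ)) := by
  have hc : (starRingEnd ℂ) u ≠ 0 := (map_ne_zero _).2 hu
  have hpolar := Complex.norm_mul_exp_arg_mul_I u
  have hpolar' : (‖u‖ : ℂ) * Complex.exp (-(u.arg * Complex.I)) = (starRingEnd ℂ) u := by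
    conv_rhs => rw [← hpolar]
    rw [map_mul, ← Complex.exp_conj, map_mul, Complex.conj_ofReal, Complex.conj_ofReal,
      Complex.conj_I, mul_neg]
  rw [div_eq_iff hc, ← hpolar', mul_left_comm, ← Complex.exp_add]
  conv_lhs => rw [← hpolar]
  congr 2
  ring

/-- The product of the three Koranyi–Reimann cross-ratios equals
`w/conj w = exp(2i·𝔸(p2,p3,p4))`, where `w = ⟨p2,p3⟩⟨p3,p4⟩⟨p4,p2⟩` and
`𝔸(p2,p3,p4) = arg(−⟨p2,p3⟩⟨p3,p4⟩⟨p4,p2⟩)` is the Cartan angular invariant. -/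
theorem KR_product_eq_cartan (p1 p2 p3 p4 : Fin 3 → ℂ)
    (hne : ∀ i j : Fin 4, i ≠ j → hermJ (![p1, p2, p3, p4] i) (![p1, p2, p3, p4] j) ≠ 0) :
    KR p1 p2 p3 p4 * KR p1 p4 p2 p3 * KR p1 p3 p4 p2 =
        hermJ p2 p3 * hermJ p3 p4 * hermJ p4 p2 /
          (starRingEnd ℂ) (hermJ p2 p3 * hermJ p3 p4 * hermJ p4 p2) ∧
    hermJ p2 p3 * hermJ p3 p4 * hermJ p4 p2 /
        (starRingEnd ℂ) (hermJ p2 p3 * hermJ p3 p4 * hermJ p4 p2) =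
      Complex.exp (2 * Complex.I *
        ((-(hermJ p2 p3 * hermJ p3 p4 * hermJ p4 p2)).arg : ℂ)) := by
  have h21 : hermJ p2 p1 ≠ 0 := hne 1 0 (by decide)
  have h31 : hermJ p3 p1 ≠ 0 := hne 2 0 (by decide)
  have h41 : hermJ p4 p1 ≠ 0 := hne 3 0 (by decide)
  have h23 : hermJ p2 p3 ≠ 0 := hne 1 2 (by decide)
  have h32 : hermJ p3 p2 ≠ 0 := hne 2 1 (by decide)
  have h34 : hermJ p3 p4 ≠ 0 := hne 2 3 (by decide)
  have h43 : hermJ p4 p3 ≠ 0 := hne 3 2 (by decide)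
  have h42 : hermJ p4 p2 ≠ 0 := hne 3 1 (by decide)
  have h24 : hermJ p2 p4 ≠ 0 := hne 1 3 (by decide)
  constructor
  · simp only [map_mul, conj_hermJ, KR]
    field_simp
  -- the sign in the Cartan invariant cancels in the quotient `w / conj w`
  · rw [← div_conj_eq_exp_arg (neg_ne_zero.2 (mul_ne_zero (mul_ne_zero h23 h34) h42)),
      map_neg, neg_div_neg_eq]
end
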